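/- Let v : ℤ → ℝ be the 9-periodic potential with (v(0),…,v(8)) = (1/2)·(1, 1, 0, 1, 0, 1, 0, 1, 1) (extended by v(n+9) = v(n)), and let H be the discrete Schrödinger operator on ℓ²(ℤ) with potential v. Then H is bijective, but the finite section method is not applicable to H; i.e. the finite sections (Hₙ) are not stable. In particular, H is a 9-periodic Schrödinger operator with {0, λ}-valued potential with rational λ = 1/2 that is not FSM-simple, so the bound 'period less than nine' in Theorem 1.1(b) is optimal. -/

import Mathlib

/-!
For bijectivity, let `S` be the shift by one period. Eliminating between the recurrences for
`f = H x` at nearby sites expresses `x (n + 9) + x (n - 9) - t * x n` as a bounded combination of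
`f (n - 8), …, f (n + 8)`, where `t` is the trace of the monodromy matrix over one period
(`dirSol_telescope`, `IsPot.trace`). Here `t = -5/2`, so `|t| > 2 ≥ ‖S + S⁻¹‖`, and `H` is bounded
below (`norm_bound`). An element orthogonal to the range of `H` lies in the kernel of `H`, by
symmetry, hence vanishes; the range is closed and dense.

For instability, the solution `u` of `H u = 0` with `u (-1) = 0`, `u 0 = 1` is multiplied by
`-1/2` over each period (`IsPot.dirSol_period`). Placed at the left end of the section of radius
`9 * k`, which starts at a multiple of the period, it is a vector of norm at least `1` whose only
residual, in the last row, has size `(1/2) * (1/4)^k` (`schFinSec_mulVec`). Hence the inverse of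
that section, if it exists, has norm at least `2 * 4^k`.
-/

noncomputable section

open Matrix

/-- The `n`-th (two-sided) finite section of the discrete Schrödinger operator with
potential `v`. -/
def schFinSec (v : ℤ → ℝ) (n : ℕ) : Matrix (Fin (2 * n + 1)) (Fin (2 * n + 1)) ℂ :=
  Matrix.of fun i j =>
    if (i : ℤ) = (j : ℤ) then ((v ((i : ℤ) - (n : ℤ))) : ℂ)
    else if (i : ℤ) = (j : ℤ) + 1 ∨ (j : ℤ) = (i : ℤ) + 1 then 1 else 0

/-! ### Solutions with a Dirichlet condition -/

/-- The solution `u` of `u (m + 2) + u m + w m * u (m + 1) = 0` with `u 0 = 0`, `u 1 = 1`. The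
index is shifted by one against the potential: `u (m + 1)` sits at the site of `w m`, and `u 0` is
the Dirichlet condition just outside the half-line. -/
def dirSol (w : ℕ → ℝ) : ℕ → ℝ
  | 0 => 0
  | 1 => 1
  | m + 2 => -dirSol w m - w m * dirSol w (m + 1)

theorem dirSol_bound (w : ℕ → ℝ) (hw : ∀ i, |w i| ≤ 1) (m : ℕ) :
    |dirSol w m| ≤ 2 ^ m ∧ |dirSol w (m + 1)| ≤ 2 ^ (m + 1) := by
  induction m with
  | zero => norm_num [dirSol]
  | succ m ih =>
    refine ⟨ih.2, ?_⟩
    have h1 : |w m * dirSol w (m + 1)| ≤ 2 ^ (m + 1) := by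
      rw [abs_mul]
      calc _ ≤ 1 * |dirSol w (m + 1)| := by gcongr; exact hw m
        _ ≤ _ := by linarith [ih.2]
    have h2 := abs_sub (-dirSol w m) (w m * dirSol w (m + 1))
    rw [abs_neg] at h2
    have h3 : (0 : ℝ) ≤ 2 ^ m := by positivity
    change |-dirSol w m - w m * dirSol w (m + 1)| ≤ _
    have := ih.1
    simp only [pow_succ] at *
    linarith

/-- Summation by parts (discrete Lagrange identity): pairing the residuals of `y` with a solution
of the homogeneous equation leaves only boundary terms. -/
theorem dirSol_telescope (w : ℕ → ℝ) (y f : ℕ → ℂ)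
    (hf : ∀ i, f i = y i + y (i + 2) + (w i : ℂ) * y (i + 1)) (k : ℕ) :
    ∑ i ∈ Finset.range k, (dirSol w (i + 1) : ℂ) * f i =
      y 0 + (dirSol w k : ℂ) * y (k + 1) - (dirSol w (k + 1) : ℂ) * y k := by
  induction k with
  | zero => simp [dirSol]
  | succ k ih =>
    rw [Finset.sum_range_succ, ih, hf]
    simp only [dirSol]
    push_cast
    ring

theorem telescope_norm_le (w : ℕ → ℝ) (hw : ∀ i, |w i| ≤ 1) (f : ℕ → ℂ) (k : ℕ) (hk : k ≤ 9) :
    ‖∑ i ∈ Finset.range k, (dirSol w (i + 1) : ℂ) * f i‖ ≤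
      512 * ∑ i ∈ Finset.range k, ‖f i‖ := by
  rw [Finset.mul_sum]
  refine (norm_sum_le _ _).trans (Finset.sum_le_sum fun i hi => ?_)
  rw [norm_mul, Complex.norm_real, Real.norm_eq_abs]
  gcongr
  have hi' : i + 1 ≤ 9 := by have := Finset.mem_range.1 hi; omega
  calc |dirSol w (i + 1)| ≤ 2 ^ (i + 1) := (dirSol_bound w hw (i + 1)).1
    _ ≤ 2 ^ 9 := pow_le_pow_right₀ (by norm_num) hi'
    _ = 512 := by norm_num

/-! ### Shifts of `ℓ²` sequences -/

/-- The `ℓ²` sequence `n ↦ ‖x (n + j)‖`. -/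
def absShift (x : lp (fun _ : ℤ => ℂ) 2) (j : ℤ) : lp (fun _ : ℤ => ℝ) 2 :=
  ⟨fun n => ‖x (n + j)‖, by
    have h := (lp.memℓp x).summable (by norm_num)
    refine memℓp_gen ?_
    simpa [Function.comp_def] using h.comp_injective (add_left_injective j)⟩

theorem absShift_apply (x : lp (fun _ : ℤ => ℂ) 2) (j n : ℤ) :
    absShift x j n = ‖x (n + j)‖ := rfl

theorem norm_absShift (x : lp (fun _ : ℤ => ℂ) 2) (j : ℤ) : ‖absShift x j‖ = ‖x‖ := by
  rw [lp.norm_eq_tsum_rpow (by norm_num), lp.norm_eq_tsum_rpow (by norm_num)]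
  congr 1
  simp only [absShift_apply, norm_norm]
  exact (Equiv.addRight j).tsum_eq fun n => ‖x n‖ ^ (2 : ENNReal).toReal

/-! ### The potential -/

theorem per_mul {v : ℤ → ℝ} (hper : ∀ n : ℤ, v (n + 9) = v n) (n q : ℤ) :
    v (n + 9 * q) = v n := by
  have h : Function.Periodic v 9 := hper
  have := h.int_mul q n
  rw [mul_comm]; simpa using this

/-- The potential of the theorem: `9`-periodic with values `(1/2)(1,1,0,1,0,1,0,1,1)`. -/
structure IsPot (v : ℤ → ℝ) : Prop where
  per : ∀ n : ℤ, v (n + 9) = v n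
  h0 : v 0 = 1 / 2
  h1 : v 1 = 1 / 2
  h2 : v 2 = 0
  h3 : v 3 = 1 / 2
  h4 : v 4 = 0
  h5 : v 5 = 1 / 2
  h6 : v 6 = 0
  h7 : v 7 = 1 / 2
  h8 : v 8 = 1 / 2

theorem IsPot.eq_of {v : ℤ → ℝ} (hv : IsPot v) (n r : ℤ) (h : (n - r) % 9 = 0) : v n = v r := by
  have := per_mul hv.per r ((n - r) / 9)
  rw [← this]; congr 1; omega

theorem IsPot.abs_le {v : ℤ → ℝ} (hv : IsPot v) (n : ℤ) : |v n| ≤ 1 := by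
  rw [hv.eq_of n (n % 9) (by omega)]
  have h1 : 0 ≤ n % 9 := by omega
  have h2 : n % 9 < 9 := by omega
  generalize n % 9 = r at *
  interval_cases r <;> norm_num [hv.h0, hv.h1, hv.h2, hv.h3, hv.h4, hv.h5, hv.h6, hv.h7, hv.h8]

/-- Relations between the solution started at `n + 9` and running leftwards and the one started at
`n - 9` and running rightwards. The second says that the monodromy over one period has trace
`-5/2`, at every base point. -/
theorem IsPot.trace {v : ℤ → ℝ} (hv : IsPot v) (n : ℤ) :
    dirSol (fun i => v (n + 8 - i)) 9 = dirSol (fun i => v (n - 8 + i)) 9 ∧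
    dirSol (fun i => v (n - 8 + i)) 8 - dirSol (fun i => v (n + 8 - i)) 10 = 5 / 2 := by
  have e1 : (fun i : ℕ => v (n + 8 - i)) = fun i : ℕ => v ((n % 9 + 8 - i) % 9) := by
    funext i; exact hv.eq_of _ _ (by omega)
  have e2 : (fun i : ℕ => v (n - 8 + i)) = fun i : ℕ => v ((n % 9 - 8 + i) % 9) := by
    funext i; exact hv.eq_of _ _ (by omega)
  rw [e1, e2]
  have h1 : 0 ≤ n % 9 := by omega
  have h2 : n % 9 < 9 := by omega
  generalize n % 9 = r at *
  interval_cases r <;> norm_num [dirSol, hv.h0, hv.h1, hv.h2, hv.h3, hv.h4, hv.h5, hv.h6, hv.h7, hv.h8]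

/-! ### Bijectivity -/

section Bijective

variable {v : ℤ → ℝ} {H : lp (fun _ : ℤ => ℂ) 2 →L[ℂ] lp (fun _ : ℤ => ℂ) 2}

/-- With `S` the shift by one period, `S + S⁻¹ + 5/2` factors through `H` with a banded cofactor;
this is the resulting pointwise estimate. -/
theorem pointwise_bound (hv : IsPot v)
    (hH : ∀ x : lp (fun _ : ℤ => ℂ) 2, ∀ n : ℤ,
      H x n = x (n + 1) + x (n - 1) + (v n : ℂ) * x n)
    (x : lp (fun _ : ℤ => ℂ) 2) (n : ℤ) :
    5 / 2 * ‖x n‖ ≤ ‖x (n + 9)‖ + ‖x (n + -9)‖ +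
      512 * (∑ i ∈ Finset.range 9, ‖H x (n + (8 - i))‖ +
        ∑ i ∈ Finset.range 8, ‖H x (n + (-8 + i))‖) := by
  have t1 := dirSol_telescope (fun i => v (n + 8 - i)) (fun i => x (n + 9 - i))
    (fun i => H x (n + (8 - i))) (fun i => by
      simp only [hH]; push_cast
      rw [show n + (8 - (i : ℤ)) + 1 = n + 9 - i by ring,
        show n + (8 - (i : ℤ)) - 1 = n + 9 - (i + 2) by ring,
        show n + (8 - (i : ℤ)) = n + 8 - i by ring,
        show n + 9 - ((i : ℤ) + 1) = n + 8 - i by ring]) 9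
  have t2 := dirSol_telescope (fun i => v (n - 8 + i)) (fun i => x (n - 9 + i))
    (fun i => H x (n + (-8 + i))) (fun i => by
      simp only [hH]; push_cast
      rw [show n + (-8 + (i : ℤ)) + 1 = n - 9 + (i + 2) by ring,
        show n + (-8 + (i : ℤ)) - 1 = n - 9 + i by ring,
        show n + (-8 + (i : ℤ)) = n - 8 + i by ring,
        show n - 9 + ((i : ℤ) + 1) = n - 8 + i by ring]
      ring) 8
  have b1 := telescope_norm_le (fun i => v (n + 8 - i)) (fun i => hv.abs_le _)
    (fun i => H x (n + (8 - i))) 9 le_rfl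
  have b2 := telescope_norm_le (fun i => v (n - 8 + i)) (fun i => hv.abs_le _)
    (fun i => H x (n + (-8 + i))) 8 (by norm_num)
  rw [t1] at b1
  rw [t2] at b2
  obtain ⟨e1, e2⟩ := hv.trace n
  have e2' : (dirSol (fun i => v (n - 8 + i)) 8 : ℂ) - dirSol (fun i => v (n + 8 - i)) 10 =
      5 / 2 := by
    rw [← Complex.ofReal_sub, e2]; norm_num
  rw [e1] at b1
  rw [show n + 9 - ((0 : ℕ) : ℤ) = n + 9 by simp, show n + 9 - ((9 + 1 : ℕ) : ℤ) = n - 1 by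
    push_cast; ring, show n + 9 - ((9 : ℕ) : ℤ) = n by push_cast; ring] at b1
  rw [show n - 9 + ((0 : ℕ) : ℤ) = n + -9 by simp [sub_eq_add_neg],
    show n - 9 + ((8 + 1 : ℕ) : ℤ) = n by push_cast; ring,
    show n - 9 + ((8 : ℕ) : ℤ) = n - 1 by push_cast; ring] at b2
  generalize hg₁ : x (n + 9) + _ - _ = g₁ at b1
  generalize hg₂ : x (n + -9) + _ - _ = g₂ at b2
  -- The coefficients of `x (n - 1)` cancel, and those of `x n` add up to minus the trace.
  have hx : (5 / 2 : ℂ) * x n = g₁ + g₂ - x (n + 9) - x (n + -9) := by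
    rw [← hg₁, ← hg₂, ← e2']
    ring
  have hn : 5 / 2 * ‖x n‖ = ‖(5 / 2 : ℂ) * x n‖ := by simp
  rw [hn, hx]
  have n1 := norm_sub_le (g₁ + g₂ - x (n + 9)) (x (n + -9))
  have n2 := norm_sub_le (g₁ + g₂) (x (n + 9))
  have n3 := norm_add_le g₁ g₂
  linarith

/-- `H` is bounded below. The constant is `512 * 17 / (5/2 - 2)`. -/
theorem norm_bound (hv : IsPot v)
    (hH : ∀ x : lp (fun _ : ℤ => ℂ) 2, ∀ n : ℤ,
      H x n = x (n + 1) + x (n - 1) + (v n : ℂ) * x n)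
    (x : lp (fun _ : ℤ => ℂ) 2) : ‖x‖ ≤ 17408 * ‖H x‖ := by
  let R : lp (fun _ : ℤ => ℝ) 2 := absShift x 9 + absShift x (-9) +
    (512 : ℝ) • (∑ i ∈ Finset.range 9, absShift (H x) (8 - i) +
      ∑ i ∈ Finset.range 8, absShift (H x) (-8 + i))
  have h1 : ‖(5 / 2 : ℂ) • x‖ ≤ ‖R‖ := by
    refine lp.norm_mono (by norm_num) fun n => ?_
    have := pointwise_bound hv hH x n
    refine le_trans (le_of_eq ?_) (this.trans (le_trans (le_of_eq ?_) (le_abs_self _)))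
    · simp
    · simp only [R, lp.coeFn_add, lp.coeFn_smul, lp.coeFn_sum, Pi.add_apply, Pi.smul_apply,
        Finset.sum_apply, absShift_apply, smul_eq_mul]
  have h2 : ‖R‖ ≤ 2 * ‖x‖ + 512 * (17 * ‖H x‖) := by
    have a1 : ‖∑ i ∈ Finset.range 9, absShift (H x) (8 - i)‖ ≤ 9 * ‖H x‖ := by
      refine (norm_sum_le _ _).trans (le_of_eq ?_)
      simp [norm_absShift]
    have a2 : ‖∑ i ∈ Finset.range 8, absShift (H x) (-8 + i)‖ ≤ 8 * ‖H x‖ := by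
      refine (norm_sum_le _ _).trans (le_of_eq ?_)
      simp [norm_absShift]
    refine (norm_add_le _ _).trans ?_
    refine add_le_add ((norm_add_le _ _).trans ?_) ?_
    · rw [norm_absShift, norm_absShift]; linarith
    · rw [norm_smul, Real.norm_eq_abs, abs_of_pos (by norm_num : (0 : ℝ) < 512)]
      gcongr
      exact (norm_add_le _ _).trans (by linarith)
  rw [norm_smul] at h1
  norm_num at h1
  linarith

theorem bijective_H (hv : IsPot v)
    (hH : ∀ x : lp (fun _ : ℤ => ℂ) 2, ∀ n : ℤ,
      H x n = x (n + 1) + x (n - 1) + (v n : ℂ) * x n) : Function.Bijective H := by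
  have hanti : AntilipschitzWith 17408 H :=
    H.antilipschitz_of_bound fun x => by simpa using norm_bound hv hH x
  refine ⟨hanti.injective, ?_⟩
  have hclosed : IsClosed (Set.range H) := hanti.isClosed_range H.uniformContinuous
  have hperp : (LinearMap.range H.toLinearMap)ᗮ = ⊥ := by
    rw [Submodule.eq_bot_iff]
    intro y hy
    have hy0 : H y = 0 := by
      ext n
      have hs : H (lp.single 2 n 1) =
          lp.single 2 (n - 1) 1 + lp.single 2 (n + 1) 1 + (v n : ℂ) • lp.single 2 n 1 := by
        ext m
        simp only [hH, lp.coeFn_add, lp.coeFn_smul, Pi.add_apply, Pi.smul_apply, lp.single_apply,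
          Pi.single_apply, smul_eq_mul]
        rw [if_congr (show m + 1 = n ↔ m = n - 1 by omega) rfl rfl,
          if_congr (show m - 1 = n ↔ m = n + 1 by omega) rfl rfl]
        by_cases h : m = n <;> simp [h]
      have h := (Submodule.mem_orthogonal _ y).1 hy (H (lp.single 2 n 1)) ⟨_, rfl⟩
      rw [hs, inner_add_left, inner_add_left, inner_smul_left, lp.inner_single_left,
        lp.inner_single_left, lp.inner_single_left] at h
      rw [hH]
      simp at h ⊢
      linear_combination h
    exact hanti.injective (by rw [hy0, map_zero])
  have htop := (Submodule.topologicalClosure_eq_top_iff).2 hperp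
  rw [IsClosed.submodule_topologicalClosure_eq (show IsClosed (Set.range H) from hclosed)] at htop
  exact LinearMap.range_eq_top.1 htop

end Bijective

/-! ### Instability of the finite sections -/

/-- The Dirichlet solution started at a multiple of the period is multiplied by `-1/2` over each
period: `(0, 1)` is an eigenvector of the monodromy. -/
theorem IsPot.dirSol_period {v : ℤ → ℝ} (hv : IsPot v) (q : ℕ) :
    dirSol (fun i => v i) (9 * q) = 0 ∧ dirSol (fun i => v i) (9 * q + 1) = (-1 / 2) ^ q := by
  induction q with
  | zero => simp [dirSol]
  | succ q ih =>
    have e (r : ℕ) : dirSol (fun i => v i) (9 * q + r + 2) = -dirSol (fun i => v i) (9 * q + r)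
        - v r * dirSol (fun i => v i) (9 * q + r + 1) := by
      change _ - v _ * _ = _
      rw [hv.eq_of ((9 * q + r : ℕ) : ℤ) r (by push_cast; omega)]
    have e0 := e 0
    have e1 := e 1
    have e2 := e 2
    have e3 := e 3
    have e4 := e 4
    have e5 := e 5
    have e6 := e 6
    have e7 := e 7
    have e8 := e 8
    simp only [Nat.cast_ofNat, Nat.cast_zero, Nat.cast_one, add_assoc, Nat.reduceAdd, add_zero,
      hv.h0, hv.h1, hv.h2, hv.h3, hv.h4, hv.h5, hv.h6, hv.h7, hv.h8, ih.1, ih.2] at *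
    simp only [mul_add, mul_one, add_assoc, Nat.reduceAdd]
    rw [pow_succ]
    constructor <;> linarith

/-- Truncated to the section, the Dirichlet solution has a residual only in the last row. -/
theorem schFinSec_mulVec (v : ℤ → ℝ) (n : ℕ) (i : Fin (2 * n + 1)) :
    (schFinSec v n *ᵥ fun j => (dirSol (fun m => v (m - n)) (j + 1) : ℂ)) i =
      if (i : ℕ) = 2 * n then -(dirSol (fun m => v (m - n)) (2 * n + 2) : ℂ) else 0 := by
  set u := dirSol (fun m => v (m - n)) with hu
  have hrec : (u (i + 2) : ℂ) = -u i - v (i - n) * u (i + 1) := by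
    rw [hu, dirSol]; push_cast; rfl
  have key : ∀ j : Fin (2 * n + 1), schFinSec v n i j * (u (j + 1) : ℂ) =
      (fun k : ℕ => (if k = (i : ℕ) then (v (i - n) : ℂ) * u (i + 1) else 0) +
        (if k = (i : ℕ) + 1 then (u (i + 2) : ℂ) else 0) +
        (if k + 1 = (i : ℕ) then (u i : ℂ) else 0)) j := by
    intro j
    simp only [schFinSec, Matrix.of_apply]
    rcases lt_trichotomy (i : ℕ) j with h | h | h
    · by_cases h' : (j : ℕ) = i + 1
      · rw [if_neg (by omega), if_pos (by omega), if_neg (by omega), if_pos h', if_neg (by omega),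
          h']
        simp
      · rw [if_neg (by omega), if_neg (by omega), if_neg (by omega), if_neg h', if_neg (by omega)]
        simp
    · rw [if_pos (by omega), if_pos h.symm, if_neg (by omega), if_neg (by omega), ← h]
      simp
    · by_cases h' : (j : ℕ) + 1 = i
      · rw [if_neg (by omega), if_pos (by omega), if_neg (by omega), if_neg (by omega), if_pos h',
          h']
        simp
      · rw [if_neg (by omega), if_neg (by omega), if_neg (by omega), if_neg (by omega), if_neg h']
        simp
  simp only [Matrix.mulVec, dotProduct]
  rw [Finset.sum_congr rfl fun j _ => key j, Fin.sum_univ_eq_sum_range (fun k : ℕ =>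
    (if k = (i : ℕ) then (v (i - n) : ℂ) * u (i + 1) else 0) +
      (if k = (i : ℕ) + 1 then (u (i + 2) : ℂ) else 0) +
      (if k + 1 = (i : ℕ) then (u i : ℂ) else 0)), Finset.sum_add_distrib,
    Finset.sum_add_distrib, Finset.sum_ite_eq', Finset.sum_ite_eq']
  have h3 : ∑ k ∈ Finset.range (2 * n + 1), (if k + 1 = (i : ℕ) then (u i : ℂ) else 0) = u i := by
    have hi := i.2
    rcases h : (i : ℕ) with _ | m
    · simp [hu, dirSol]
    · have : m ∈ Finset.range (2 * n + 1) := by rw [Finset.mem_range]; omega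
      simp [Finset.sum_ite_eq', this]
  rw [h3, if_pos (Finset.mem_range.2 i.2)]
  have hi := i.2
  split_ifs with h1 h2 h2
  · rw [Finset.mem_range] at h1; omega
  · rw [hrec]; ring
  · rw [show u (2 * n + 2) = u (i + 2) by rw [h2], hrec]; ring
  · rw [Finset.mem_range] at h1; omega

/-- the `9`-periodic Schrödinger operator with potential repeating
`(1/2)·(1, 1, 0, 1, 0, 1, 0, 1, 1)` is bijective, but its finite sections are not stable; in
particular, this operator is not FSM-simple. -/
theorem stmt19 (v : ℤ → ℝ)
    (hper : ∀ n : ℤ, v (n + 9) = v n)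
    (h0 : v 0 = 1 / 2) (h1 : v 1 = 1 / 2) (h2 : v 2 = 0)
    (h3 : v 3 = 1 / 2) (h4 : v 4 = 0) (h5 : v 5 = 1 / 2) (h6 : v 6 = 0)
    (h7 : v 7 = 1 / 2) (h8 : v 8 = 1 / 2)
    (H : lp (fun _ : ℤ => ℂ) 2 →L[ℂ] lp (fun _ : ℤ => ℂ) 2)
    (hH : ∀ x : lp (fun _ : ℤ => ℂ) 2, ∀ n : ℤ,
      H x n = x (n + 1) + x (n - 1) + (v n : ℂ) * x n) :
    Function.Bijective H ∧
      ∀ n₀ : ℕ, ∀ C : ℝ, 0 < C → ∃ n : ℕ, n₀ ≤ n ∧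
        (¬ IsUnit (schFinSec v n) ∨
          C < ‖Matrix.toEuclideanCLM (𝕜 := ℂ) ((schFinSec v n)⁻¹)‖) := by
  have hv : IsPot v := ⟨hper, h0, h1, h2, h3, h4, h5, h6, h7, h8⟩
  refine ⟨bijective_H hv hH, fun n₀ C hC => ?_⟩
  obtain ⟨k₀, hk₀⟩ := exists_pow_lt_of_lt_one (inv_pos.2 hC) (show (1 / 4 : ℝ) < 1 by norm_num)
  let k := max n₀ k₀
  have hk : (1 / 4 : ℝ) ^ k < C⁻¹ :=
    (pow_le_pow_of_le_one (by norm_num) (by norm_num) (le_max_right _ _)).trans_lt hk₀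
  refine ⟨9 * k, by have := le_max_left n₀ k₀; change _ ≤ 9 * max n₀ k₀; omega, ?_⟩
  by_cases hu : IsUnit (schFinSec v (9 * k))
  swap
  · exact Or.inl hu
  right
  set n := 9 * k with hn
  set A := schFinSec v n with hA
  have ew : (fun m : ℕ => v (m - n)) = fun m : ℕ => v m := by
    funext m; exact hv.eq_of _ _ (by omega)
  let x : EuclideanSpace ℂ (Fin (2 * n + 1)) :=
    WithLp.toLp 2 fun j => (dirSol (fun m => v m) (j + 1) : ℂ)
  have hval : dirSol (fun m => v m) (2 * n + 2) = -(1 / 2) * (1 / 4) ^ k := by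
    obtain ⟨p1, p2⟩ := hv.dirSol_period (2 * k)
    have e : 2 * n = 9 * (2 * k) := by omega
    rw [e, dirSol, p1, p2, hv.eq_of _ 0 (by push_cast; omega), h0, pow_mul]
    norm_num
  have hAx : Matrix.toEuclideanCLM (𝕜 := ℂ) A x =
      EuclideanSpace.single (Fin.last (2 * n)) ((1 / 2 * (1 / 4) ^ k : ℝ) : ℂ) := by
    ext i
    have := schFinSec_mulVec v n i
    rw [ew, hval] at this
    simp only [x, Matrix.toEuclideanCLM_toLp]
    rw [this, PiLp.single_apply]
    simp only [Fin.ext_iff, Fin.val_last]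
    split_ifs <;> push_cast <;> ring
  have hinv : Matrix.toEuclideanCLM (𝕜 := ℂ) A⁻¹ (Matrix.toEuclideanCLM (𝕜 := ℂ) A x) = x := by
    rw [← mul_apply_eq_comp, ← map_mul,
      Matrix.nonsing_inv_mul A ((Matrix.isUnit_iff_isUnit_det A).1 hu), map_one]
    rfl
  have hx : 1 ≤ ‖x‖ := by
    have := PiLp.norm_apply_le x 0
    simpa [x, dirSol] using this
  have hle := (Matrix.toEuclideanCLM (𝕜 := ℂ) A⁻¹).le_opNorm (Matrix.toEuclideanCLM (𝕜 := ℂ) A x)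
  have hp : (0 : ℝ) < (1 / 4) ^ k := by positivity
  rw [hinv, hAx, PiLp.norm_single, Complex.norm_real, Real.norm_eq_abs,
    abs_of_pos (by positivity)] at hle
  have hC1 : C * (1 / 4) ^ k < 1 := by
    have := mul_lt_mul_of_pos_left hk hC
    rwa [mul_inv_cancel₀ hC.ne'] at this
  by_contra! hcon
  have := mul_le_mul_of_nonneg_right hcon (show (0 : ℝ) ≤ 1 / 2 * (1 / 4) ^ k by positivity)
  nlinarith
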